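/- Let T be a positive integer, S a finite nonempty index set, and α^(1) : S → ℝ weights with ∑_{j∈S} α^(1)_j = 1. For each layer ℓ ≥ 2 let w^(ℓ) be an arbitrary function that assigns to any family of residual vectors (R_j)_{j ∈ S∪{i}} in ℝ^T a family of weights in ℝ^S, and define the residual recursion: R^(2)_m = X_m − ∑_{j∈S} α^(1)_j X_j for each m ∈ S∪{i} (using the same first-layer weights), and R^(ℓ+1)_m = R^(ℓ)_m − ∑_{j∈S} (w^(ℓ)(R^(ℓ)))_j · R^(ℓ)_j for ℓ ≥ 2. Suppose X_m = P + D_m for all m ∈ S∪{i}, with a common vector P ∈ ℝ^T. Then for every ℓ ≥ 2, the residual R^(ℓ)_i is the same as the residual obtained by replacing P with any other vector P' ∈ ℝ^T (keeping the perturbations D_m fixed); i.e., R^(ℓ)_i depends only on the perturbations (D_m) and not on the implicit pattern P. -/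

import Mathlib

/-!
Subtracting a combination whose weights sum to one kills a common translation, so the first
residual already forgets the pattern. Every later layer computes both its weights and its
combination from the current residuals alone, so the agreement propagates by induction, even though
the later weights are not normalized.
-/

/-- The TSNN residual recursion. `tsnnResid i S α1 w X n` is the residual
`R^(n+2)` of layer `n + 2`:
`R^(2)_m = X_m - ∑_{j∈S} α1_j • X_j`, and for `ℓ ≥ 2`,
`R^(ℓ+1)_m = R^(ℓ)_m - ∑_{j∈S} (w^(ℓ) (R^(ℓ)|_{S∪{i}}))_j • R^(ℓ)_j`,
where the layer-`ℓ` weights `w ℓ` are an arbitrary function of the family of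
residual vectors indexed by `S ∪ {i}`. -/
noncomputable def tsnnResid {T : ℕ} {ι : Type*} [DecidableEq ι]
    (i : ι) (S : Finset ι) (α1 : ι → ℝ)
    (w : ℕ → ((↥(insert i S)) → Fin T → ℝ) → ι → ℝ)
    (X : ι → Fin T → ℝ) : ℕ → ι → Fin T → ℝ
  | 0 => fun m => X m - ∑ j ∈ S, α1 j • X j
  | n + 1 => fun m =>
      tsnnResid i S α1 w X n m -
        ∑ j ∈ S, w (n + 2) (fun m' => tsnnResid i S α1 w X n m'.val) j •
          tsnnResid i S α1 w X n j

section LayerResidual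

variable {R M ι : Type*} [Semiring R] [AddCommGroup M] [Module R M]
  {S : Finset ι} {t : Set ι} {a : ι → R} {x y : ι → M}

/-- The operation performed by one TSNN layer: from each signal `x m` subtract the combination of
the matched signals `x j`, `j ∈ S`, with weights `a j`. -/
def subWeightedSum (S : Finset ι) (a : ι → R) (x : ι → M) : ι → M :=
  fun m => x m - ∑ j ∈ S, a j • x j

theorem eqOn_subWeightedSum (a : ι → R) (hSt : ↑S ⊆ t) (hxy : Set.EqOn x y t) :
    Set.EqOn (subWeightedSum S a x) (subWeightedSum S a y) t := by
  have hsum : ∑ j ∈ S, a j • x j = ∑ j ∈ S, a j • y j :=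
    Finset.sum_congr rfl fun j hj => by rw [hxy (hSt hj)]
  intro m hm
  simp only [subWeightedSum, hxy hm, hsum]

theorem subWeightedSum_const_add (ha : ∑ j ∈ S, a j = 1) (p : M) (x : ι → M) :
    subWeightedSum S a (fun m => p + x m) = subWeightedSum S a x := by
  funext m
  calc p + x m - ∑ j ∈ S, a j • (p + x j)
      = p + x m - ((∑ j ∈ S, a j) • p + ∑ j ∈ S, a j • x j) := by
        simp only [smul_add, Finset.sum_add_distrib, Finset.sum_smul]
    _ = x m - ∑ j ∈ S, a j • x j := by rw [ha, one_smul, add_sub_add_left_eq_sub]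

/-- The residual recursion of `tsnnResid` for signals in an arbitrary module. The weights `w n`
take the whole family of residuals; that they are computed from the residuals indexed by `t` only
is expressed by `DependsOn (w n) t`. The weights `w 0` are those of the second layer. -/
def layerResidual (S : Finset ι) (a : ι → R) (w : ℕ → (ι → M) → ι → R) (x : ι → M) :
    ℕ → ι → M
  | 0 => subWeightedSum S a x
  | n + 1 => subWeightedSum S (w n (layerResidual S a w x n)) (layerResidual S a w x n)

variable {w : ℕ → (ι → M) → ι → R}

theorem eqOn_layerResidual_of_eqOn_subWeightedSum (hSt : ↑S ⊆ t) (hw : ∀ n, DependsOn (w n) t)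
    (h : Set.EqOn (subWeightedSum S a x) (subWeightedSum S a y) t) (n : ℕ) :
    Set.EqOn (layerResidual S a w x n) (layerResidual S a w y n) t := by
  induction n with
  | zero => exact h
  | succ n ih =>
    have hweights : w n (layerResidual S a w x n) = w n (layerResidual S a w y n) :=
      hw n fun _ hm => ih hm
    simp only [layerResidual, hweights]
    exact eqOn_subWeightedSum _ hSt ih

theorem tsnn_residuals_independent_of_pattern_general (hSt : ↑S ⊆ t) (ha : ∑ j ∈ S, a j = 1)
    (hw : ∀ n, DependsOn (w n) t) {p q : M} {d : ι → M}
    (hx : Set.EqOn x (fun m => p + d m) t) (hy : Set.EqOn y (fun m => q + d m) t) (n : ℕ) :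
    Set.EqOn (layerResidual S a w x n) (layerResidual S a w y n) t := by
  have forget_pattern {z : ι → M} {r : M} (hz : Set.EqOn z (fun m => r + d m) t) :
      Set.EqOn (subWeightedSum S a z) (subWeightedSum S a d) t := by
    simpa only [subWeightedSum_const_add ha] using eqOn_subWeightedSum a hSt hz
  exact eqOn_layerResidual_of_eqOn_subWeightedSum hSt hw
    ((forget_pattern hx).trans (forget_pattern hy).symm) n

end LayerResidual

theorem tsnnResid_eq_layerResidual {T : ℕ} {ι : Type*} [DecidableEq ι]
    (i : ι) (S : Finset ι) (α : ι → ℝ) (w : ℕ → (↥(insert i S) → Fin T → ℝ) → ι → ℝ)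
    (X : ι → Fin T → ℝ) (n : ℕ) :
    tsnnResid i S α w X n =
      layerResidual S α (fun k Y => w (k + 2) ((insert i S).restrict Y)) X n := by
  induction n with
  | zero => rfl
  | succ n ih =>
    simp only [layerResidual, ← ih]
    rfl

/-- iterated form of Lemma 1: if all signals indexed by
`S ∪ {i}` share a common implicit pattern (`X m = P + D m` versus
`X' m = P' + D m` with the same perturbations `D m`), and the first-layer
weights sum to 1, then for every layer `ℓ = n + 2 ≥ 2` the residual at `i` is
independent of the implicit pattern: it is the same for `P` and `P'`. -/
theorem tsnn_residuals_independent_of_pattern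
    {T : ℕ} (hT : 0 < T) {ι : Type*} [DecidableEq ι]
    (i : ι) (S : Finset ι) (hS : S.Nonempty)
    (α1 : ι → ℝ) (hα : ∑ j ∈ S, α1 j = 1)
    (w : ℕ → ((↥(insert i S)) → Fin T → ℝ) → ι → ℝ)
    (P P' : Fin T → ℝ) (D : ι → Fin T → ℝ)
    (X X' : ι → Fin T → ℝ)
    (hX : ∀ m ∈ insert i S, X m = P + D m)
    (hX' : ∀ m ∈ insert i S, X' m = P' + D m) :
    ∀ n : ℕ, tsnnResid i S α1 w X n i = tsnnResid i S α1 w X' n i := by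
  intro n
  have hw (k : ℕ) : DependsOn (fun Y : ι → Fin T → ℝ => w (k + 2) ((insert i S).restrict Y))
      (insert i S : Finset ι) :=
    fun _ _ h => congrArg (w (k + 2)) ((insert i S).dependsOn_restrict h)
  simp only [tsnnResid_eq_layerResidual]
  exact tsnn_residuals_independent_of_pattern_general
    (Finset.coe_subset.2 (Finset.subset_insert i S)) hα hw hX hX' n (Finset.mem_insert_self i S)
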